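/- Let X be a set and let k : X × X → ℝ be symmetric, non-negative, and conditionally negative definite (CND). Then for every α ∈ [0,1], the function k^α defined by k^α(x,y) := (k(x,y))^α is also conditionally negative definite. -/

import Mathlib

/-!
Fractional powers are Bernstein functions, and Bernstein functions operate on non-negative
conditionally negative definite kernels. Concretely, for `0 < α < 1` and `x ≥ 0`,
`x ^ α` is a positive multiple of `∫ t in (0, ∞), t ^ α * (t⁻¹ - (t + x)⁻¹)`
(`Real.rpow_eq_const_mul_integral`). On coefficients of sum zero the term `t⁻¹` contributes
nothing, so it is enough that `(t + k)⁻¹` is positive semidefinite (`quad_inv_nonneg`). Since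
`(t + k)⁻¹ = ∫ s in (0, ∞), exp (-s (t + k))`, this follows from Schoenberg's theorem that
`exp (-s k)` is positive semidefinite (`quad_exp_neg_nonneg`).

For the latter, fix a base point `p`. The kernel
`B x y = k x p + k y p - k x y - k p p` is positive semidefinite, and `exp (-s k)` is
`exp (s B)` multiplied by a positive rank-one kernel. Finally the entrywise exponential
preserves positive semidefiniteness: it is the limit of `(1 + B / n) ^ n`, whose entrywise
powers are positive semidefinite by the Schur product theorem.

The borderline exponents `α = 0` (a constant kernel, as `0 ^ 0 = 1`) and `α = 1` are immediate.
-/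

/-- A symmetric function `k : X → X → ℝ` is conditionally negative definite if for all finite
families `x : Fin m → X` and coefficients `c : Fin m → ℝ` summing to zero,
`∑ i j, c i * c j * k (x i) (x j) ≤ 0`. -/
def IsCND {X : Type*} (k : X → X → ℝ) : Prop :=
  ∀ (m : ℕ) (x : Fin m → X) (c : Fin m → ℝ),
    (∑ i, c i) = 0 → (∑ i, ∑ j, c i * c j * k (x i) (x j)) ≤ 0

open MeasureTheory Filter Topology

lemma posSemidef_iff_quad {m : ℕ} (M : Matrix (Fin m) (Fin m) ℝ) :
    M.PosSemidef ↔ (∀ i j, M i j = M j i) ∧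
      ∀ c : Fin m → ℝ, 0 ≤ ∑ i, ∑ j, c i * c j * M i j := by
  rw [Matrix.posSemidef_iff_dotProduct_mulVec]
  refine and_congr ?_ (forall_congr' fun c => ?_)
  · rw [Matrix.IsHermitian.ext_iff]
    exact ⟨fun h i j => by simpa using h j i, fun h i j => by simpa using h j i⟩
  · have : star c ⬝ᵥ (M.mulVec c) = ∑ i, ∑ j, c i * c j * M i j := by
      simp only [dotProduct, Matrix.mulVec, Finset.mul_sum, Pi.star_apply, star_trivial]
      exact Finset.sum_congr rfl fun i _ => Finset.sum_congr rfl fun j _ => by ring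
    rw [this]

lemma posSemidef_ones (m : ℕ) : (Matrix.of fun _ _ : Fin m => (1 : ℝ)).PosSemidef := by
  rw [posSemidef_iff_quad]
  refine ⟨fun i j => rfl, fun c => ?_⟩
  have : ∑ i, ∑ j, c i * c j * (Matrix.of fun _ _ : Fin m => (1 : ℝ)) i j = (∑ i, c i) ^ 2 := by
    simp [sq, Finset.sum_mul_sum]
  rw [this]
  positivity

/-- Entrywise powers preserve positive semidefiniteness, by the Schur product theorem. -/
lemma posSemidef_entrywise_pow {m : ℕ} {M : Matrix (Fin m) (Fin m) ℝ} (hM : M.PosSemidef)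
    (n : ℕ) : (Matrix.of fun i j => M i j ^ n).PosSemidef := by
  induction n with
  | zero => simpa using posSemidef_ones m
  | succ n ih =>
    have h := ih.hadamard hM
    have e : (Matrix.of fun i j => M i j ^ (n + 1)) =
        (Matrix.of fun i j => M i j ^ n).hadamard M := by
      ext i j
      simp [pow_succ]
    rw [e]
    exact h

/-- The entrywise exponential of a positive semidefinite matrix has non-negative quadratic form,
as a limit of the entrywise powers `(1 + M / n) ^ n`. -/
lemma quad_exp_nonneg {m : ℕ} {M : Matrix (Fin m) (Fin m) ℝ} (hM : M.PosSemidef)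
    (c : Fin m → ℝ) : 0 ≤ ∑ i, ∑ j, c i * c j * Real.exp (M i j) := by
  have hlim : Tendsto (fun n : ℕ => ∑ i, ∑ j, c i * c j * (1 + M i j / n) ^ n) atTop
      (𝓝 (∑ i, ∑ j, c i * c j * Real.exp (M i j))) :=
    tendsto_finsetSum _ fun i _ => tendsto_finsetSum _ fun j _ =>
      (Real.tendsto_one_add_div_pow_exp (M i j)).const_mul _
  refine ge_of_tendsto' hlim fun n => ?_
  have h1 : (Matrix.of (fun _ _ : Fin m => (1 : ℝ)) + (n : ℝ)⁻¹ • M).PosSemidef :=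
    (posSemidef_ones m).add (hM.smul (by positivity))
  have h2 := ((posSemidef_iff_quad _).1 (posSemidef_entrywise_pow h1 n)).2 c
  simpa [div_eq_inv_mul] using h2

/-- The kernel `k x p + k y p - k x y - k p p` is positive semidefinite when `k` is symmetric and
conditionally negative definite: add the point `p` with weight `-∑ i, c i`. -/
lemma posSemidef_of_cnd {X : Type*} {k : X → X → ℝ} (hsymm : ∀ x y, k x y = k y x)
    (hcnd : IsCND k) {m : ℕ} (x : Fin m → X) (p : X) :
    (Matrix.of fun i j => k (x i) p + k (x j) p - k (x i) (x j) - k p p).PosSemidef := by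
  rw [posSemidef_iff_quad]
  refine ⟨fun i j => ?_, fun c => ?_⟩
  · simp only [Matrix.of_apply, hsymm (x i) (x j)]
    ring
  · have h := hcnd (m + 1) (Fin.cons p x) (Fin.cons (-∑ i, c i) c) (by simp [Fin.sum_univ_succ])
    simp only [Fin.sum_univ_succ, Fin.cons_zero, Fin.cons_succ, Finset.sum_add_distrib] at h
    have e1 : ∑ j, (-∑ i, c i) * c j * k p (x j) = -((∑ i, c i) * ∑ j, c j * k (x j) p) := by
      rw [← neg_mul, Finset.mul_sum]
      exact Finset.sum_congr rfl fun j _ => by rw [hsymm p]; ring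
    have e2 : ∑ j, c j * (-∑ i, c i) * k (x j) p = -((∑ i, c i) * ∑ j, c j * k (x j) p) := by
      rw [← neg_mul, Finset.mul_sum]
      exact Finset.sum_congr rfl fun j _ => by ring
    rw [e1, e2] at h
    have e3 : ∑ i, ∑ j, c i * c j *
        (Matrix.of fun i j => k (x i) p + k (x j) p - k (x i) (x j) - k p p) i j =
        (∑ i, c i * k (x i) p) * (∑ j, c j) + (∑ i, c i) * (∑ j, c j * k (x j) p)
          - (∑ i, ∑ j, c i * c j * k (x i) (x j)) - (∑ i, c i) * (∑ j, c j) * k p p := by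
      simp only [Finset.sum_mul, Finset.mul_sum, ← Finset.sum_add_distrib,
        ← Finset.sum_sub_distrib, Matrix.of_apply]
      exact Finset.sum_congr rfl fun i _ => Finset.sum_congr rfl fun j _ => by ring
    rw [e3]
    linarith

/-- Schoenberg's theorem: `exp (-s k)` is positive semidefinite for `k` symmetric and
conditionally negative definite and `s ≥ 0`. -/
lemma quad_exp_neg_nonneg {X : Type*} {k : X → X → ℝ} (hsymm : ∀ x y, k x y = k y x)
    (hcnd : IsCND k) {s : ℝ} (hs : 0 ≤ s) {m : ℕ} (x : Fin m → X) (c : Fin m → ℝ) :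
    0 ≤ ∑ i, ∑ j, c i * c j * Real.exp (-s * k (x i) (x j)) := by
  rcases m with _ | m
  · simp
  -- Any base point works; the first of the given points is available since the family is nonempty.
  set p := x 0
  have h := quad_exp_nonneg ((posSemidef_of_cnd hsymm hcnd x p).smul hs)
    fun i => c i * Real.exp (-s * (k (x i) p - k p p / 2))
  refine h.trans_eq (Finset.sum_congr rfl fun i _ => Finset.sum_congr rfl fun j _ => ?_)
  have : Real.exp (-s * k (x i) (x j)) = Real.exp (-s * (k (x i) p - k p p / 2)) *
      Real.exp (-s * (k (x j) p - k p p / 2)) *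
      Real.exp (s * (k (x i) p + k (x j) p - k (x i) (x j) - k p p)) := by
    rw [← Real.exp_add, ← Real.exp_add]
    ring_nf
  rw [this]
  simp only [Matrix.smul_apply, Matrix.of_apply, smul_eq_mul]
  ring

/-- The kernel `(t + k)⁻¹` is positive semidefinite, being the Laplace transform
`∫ s in (0, ∞), exp (-s t) * exp (-s k)`. -/
lemma quad_inv_nonneg {X : Type*} {k : X → X → ℝ} (hsymm : ∀ x y, k x y = k y x)
    (hnonneg : ∀ x y, 0 ≤ k x y) (hcnd : IsCND k) {t : ℝ} (ht : 0 < t) {m : ℕ}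
    (x : Fin m → X) (c : Fin m → ℝ) :
    0 ≤ ∑ i, ∑ j, c i * c j * (t + k (x i) (x j))⁻¹ := by
  have hneg : ∀ i j, -(t + k (x i) (x j)) < 0 := fun i j => by linarith [hnonneg (x i) (x j)]
  have hintegrable : ∀ i j, IntegrableOn
      (fun s : ℝ => c i * c j * Real.exp (-(t + k (x i) (x j)) * s)) (Set.Ioi 0) := fun i j =>
    (integrableOn_exp_mul_Ioi (hneg i j) 0).const_mul _
  have hval : ∀ i j, c i * c j * (t + k (x i) (x j))⁻¹ =
      ∫ s in Set.Ioi (0 : ℝ), c i * c j * Real.exp (-(t + k (x i) (x j)) * s) := fun i j => by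
    rw [integral_const_mul, integral_exp_mul_Ioi (hneg i j)]
    rw [mul_zero, Real.exp_zero, neg_div_neg_eq, one_div]
  simp only [hval]
  simp_rw [← integral_finsetSum _ fun j _ => hintegrable _ j]
  rw [← integral_finsetSum _ fun i _ => integrable_finsetSum _ fun j _ => hintegrable i j]
  refine setIntegral_nonneg measurableSet_Ioi fun s hs => ?_
  have h := mul_nonneg (Real.exp_pos (-t * s)).le
    (quad_exp_neg_nonneg hsymm hcnd (le_of_lt hs) x c)
  refine h.trans_eq ?_
  simp only [Finset.mul_sum]
  refine Finset.sum_congr rfl fun i _ => Finset.sum_congr rfl fun j _ => ?_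
  rw [show -(t + k (x i) (x j)) * s = -t * s + -s * k (x i) (x j) by ring, Real.exp_add]
  ring

/-- If `k : X → X → ℝ` is symmetric, non-negative and conditionally negative definite, then
`k^α` is conditionally negative definite for every `α ∈ [0,1]`. -/
theorem cnd_rpow_of_cnd
    {X : Type*} (k : X → X → ℝ)
    (hsymm : ∀ x y, k x y = k y x)
    (hnonneg : ∀ x y, 0 ≤ k x y)
    (hcnd : IsCND k)
    (α : ℝ) (h0 : 0 ≤ α) (h1 : α ≤ 1) :
    IsCND (fun x y => k x y ^ α) := by
  intro m x c hc
  have hconst : ∀ a : ℝ, ∑ i, ∑ j, c i * c j * a = 0 := fun a => by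
    simp only [← Finset.sum_mul, ← Finset.mul_sum, hc, mul_zero, zero_mul, Finset.sum_const_zero]
  rcases h0.eq_or_lt with rfl | h0
  · simpa using (hconst 1).le
  rcases h1.eq_or_lt with rfl | h1
  · simpa using hcnd m x c hc
  have hα : α ∈ Set.Ioo (0 : ℝ) 1 := ⟨h0, h1⟩
  have hintegrable : ∀ i j, IntegrableOn
      (fun t : ℝ => c i * c j * Real.rpowIntegrand₀₁ α t (k (x i) (x j))) (Set.Ioi 0) :=
    fun i j => (Real.integrableOn_rpowIntegrand₀₁_Ioi hα (hnonneg _ _)).const_mul _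
  have hval : ∀ i j, c i * c j * k (x i) (x j) ^ α =
      (∫ t in Set.Ioi 0, Real.rpowIntegrand₀₁ α t 1)⁻¹ *
        ∫ t in Set.Ioi 0, c i * c j * Real.rpowIntegrand₀₁ α t (k (x i) (x j)) := fun i j => by
    rw [integral_const_mul, Real.rpow_eq_const_mul_integral hα (hnonneg _ _)]
    ring
  simp only [hval, ← Finset.mul_sum]
  refine mul_nonpos_of_nonneg_of_nonpos
    (inv_nonneg.2 (Real.integral_rpowIntegrand₀₁_one_pos hα).le) ?_
  simp_rw [← integral_finsetSum _ fun j _ => hintegrable _ j]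
  rw [← integral_finsetSum _ fun i _ => integrable_finsetSum _ fun j _ => hintegrable i j]
  refine setIntegral_nonpos measurableSet_Ioi fun t ht => ?_
  have ht' : (0 : ℝ) < t := ht
  have e : ∑ i, ∑ j, c i * c j * Real.rpowIntegrand₀₁ α t (k (x i) (x j)) =
      ∑ i, ∑ j, c i * c j * (t ^ α * t⁻¹) -
        t ^ α * ∑ i, ∑ j, c i * c j * (t + k (x i) (x j))⁻¹ := by
    simp only [Finset.mul_sum, ← Finset.sum_sub_distrib, Real.rpowIntegrand₀₁]
    exact Finset.sum_congr rfl fun i _ => Finset.sum_congr rfl fun j _ => by ring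
  rw [e, hconst]
  have := mul_nonneg (Real.rpow_nonneg ht'.le α) (quad_inv_nonneg hsymm hnonneg hcnd ht' x c)
  linarith
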